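/- arXiv:2010.04521 — 4 statements merged into one kernel-verified Lean document; each statement's English description precedes it below -/
import Mathlib

section
/- Let n ≥ 2. The map Q ↦ Q† (Moore–Penrose pseudoinverse) is a bijection from the set of n×n Laplacian matrices onto the set of real symmetric positive semidefinite n×n matrices M with M·u = 0, rank n−1, and all off-diagonal entries of M† nonpositive (the canonical Gram matrices of hyperacute Simplices on n vertices); its inverse is M ↦ M†. -/
/-!
The pseudoinverse is an involution on all matrices, and it preserves symmetry, semidefiniteness,
rank and, on symmetric matrices, the kernel. On the other side, for a symmetric matrix `Q` with
zero row sums and nonpositive off-diagonal entries, irreducibility says exactly that the kernel is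
spanned by `1`: this is read off the identity `-2 xᵀQx = ∑ᵢⱼ Qᵢⱼ (xᵢ - xⱼ)²`, which also gives
semidefiniteness. So the Laplacian conditions on `Q` other than the signs amount to symmetry,
`Q 1 = 0` and rank `n - 1`, and these pass between `M` and `M†`: `M` is a hyperacute Gram matrix
if and only if `M†` is a Laplacian.
-/

open Matrix

/-- A Laplacian matrix: symmetric, nonpositive off-diagonal entries, zero row sums,
and irreducible. -/
def IsLaplacian {m : Type*} [Fintype m] [DecidableEq m] (Q : Matrix m m ℝ) : Prop :=
  Q.IsSymm ∧ (∀ i j, i ≠ j → Q i j ≤ 0) ∧ (Q *ᵥ (fun _ => (1 : ℝ)) = 0) ∧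
  ∀ V : Finset m, V.Nonempty → V ≠ Finset.univ → ∃ i ∈ V, ∃ j ∉ V, Q i j ≠ 0

/-- `B` is the Moore–Penrose pseudoinverse of `A`. -/
def IsMoorePenrose {k l : Type*} [Fintype k] [Fintype l]
    (A : Matrix k l ℝ) (B : Matrix l k ℝ) : Prop :=
  A * B * A = A ∧ B * A * B = B ∧ (A * B)ᵀ = A * B ∧ (B * A)ᵀ = B * A

/-- The Moore–Penrose pseudoinverse of a real square matrix (it always exists and
is unique, so this picks out exactly `A†`). -/
noncomputable def pinv {n : ℕ} (A : Matrix (Fin n) (Fin n) ℝ) :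
    Matrix (Fin n) (Fin n) ℝ := by
  classical exact if h : ∃ B, IsMoorePenrose A B then h.choose else 0

/-- The set of `n × n` Laplacian matrices. -/
def LapSet (n : ℕ) : Set (Matrix (Fin n) (Fin n) ℝ) := {Q | IsLaplacian Q}

/-- The canonical Gram matrices of hyperacute Simplices on `n` vertices:
symmetric positive semidefinite matrices `M` with `M·u = 0`, rank `n − 1`,
and all off-diagonal entries of `M†` nonpositive. -/
def HypGramSet (n : ℕ) : Set (Matrix (Fin n) (Fin n) ℝ) :=
  {M | M.IsSymm ∧ M.PosSemidef ∧ M *ᵥ (fun _ => (1 : ℝ)) = 0 ∧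
    M.rank = n - 1 ∧ ∀ i j, i ≠ j → pinv M i j ≤ 0}

section Pseudoinverse

variable {k l : Type*} [Fintype k] [Fintype l]

namespace IsMoorePenrose

variable {A : Matrix k l ℝ} {B : Matrix l k ℝ}

theorem symm (h : IsMoorePenrose A B) : IsMoorePenrose B A :=
  ⟨h.2.1, h.1, h.2.2.2, h.2.2.1⟩

theorem transpose (h : IsMoorePenrose A B) : IsMoorePenrose Aᵀ Bᵀ := by
  obtain ⟨hABA, hBAB, hAB, hBA⟩ := h
  refine ⟨?_, ?_, ?_, ?_⟩
  · rw [Matrix.mul_assoc, ← transpose_mul, ← transpose_mul, hABA]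
  · rw [Matrix.mul_assoc, ← transpose_mul, ← transpose_mul, hBAB]
  · rw [← transpose_mul, hBA, hBA]
  · rw [← transpose_mul, hAB, hAB]

theorem mul_eq_mul {C : Matrix l k ℝ} (hB : IsMoorePenrose A B) (hC : IsMoorePenrose A C) :
    A * B = A * C :=
  calc A * B = (A * C * (A * B))ᵀ := by rw [← Matrix.mul_assoc, hC.1, hB.2.2.1]
    _ = A * B * (A * C) := by rw [transpose_mul, hB.2.2.1, hC.2.2.1]
    _ = A * C := by rw [← Matrix.mul_assoc, hB.1]

theorem unique {C : Matrix l k ℝ} (hB : IsMoorePenrose A B) (hC : IsMoorePenrose A C) :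
    B = C := by
  have hBA : B * A = C * A := by
    simpa only [← transpose_mul, transpose_inj] using hB.transpose.mul_eq_mul hC.transpose
  calc B = B * A * B := hB.2.1.symm
    _ = C * A * C := by rw [hBA, Matrix.mul_assoc, hB.mul_eq_mul hC, ← Matrix.mul_assoc]
    _ = C := hC.2.1

theorem rank_le (h : IsMoorePenrose A B) : A.rank ≤ B.rank :=
  calc A.rank = (A * B * A).rank := by rw [h.1]
    _ ≤ (A * B).rank := rank_mul_le_left _ _
    _ ≤ B.rank := rank_mul_le_right _ _

theorem rank_eq (h : IsMoorePenrose A B) : A.rank = B.rank :=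
  h.rank_le.antisymm h.symm.rank_le

theorem mulVec_eq_zero (h : IsMoorePenrose A B) {x : k → ℝ} (hx : Aᵀ *ᵥ x = 0) :
    B *ᵥ x = 0 := by
  have hB : B = B * Bᵀ * Aᵀ := by
    rw [Matrix.mul_assoc, ← transpose_mul, h.2.2.1, ← Matrix.mul_assoc, h.2.1]
  rw [hB, ← mulVec_mulVec, hx, mulVec_zero]

theorem isSymm {A B : Matrix k k ℝ} (h : IsMoorePenrose A B) (hA : A.IsSymm) : B.IsSymm :=
  unique (hA.eq ▸ h.transpose) h

theorem posSemidef {A B : Matrix k k ℝ} (h : IsMoorePenrose A B) (hA : A.PosSemidef) :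
    B.PosSemidef := by
  have hB : B.IsHermitian := h.isSymm hA.isHermitian
  simpa only [hB.eq, h.2.1] using hA.mul_mul_conjTranspose_same B

end IsMoorePenrose

-- The convention `0⁻¹ = 0` makes inversion on the spectrum send the kernel to the kernel.
theorem isMoorePenrose_cfc_inv [DecidableEq k] {A : Matrix k k ℝ} (hA : A.IsHermitian) :
    IsMoorePenrose A (cfc (·⁻¹ : ℝ → ℝ) A) := by
  have hcont (f : ℝ → ℝ) : ContinuousOn f (spectrum ℝ A) := A.finite_real_spectrum.continuousOn f
  have hid : cfc (fun x : ℝ ↦ x) A = A := cfc_id' ℝ A hA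
  have hmul (f g : ℝ → ℝ) : cfc f A * cfc g A = cfc (fun x ↦ f x * g x) A :=
    (cfc_mul f g A (hcont f) (hcont g)).symm
  have hmul_left (f : ℝ → ℝ) : A * cfc f A = cfc (fun x ↦ x * f x) A := by rw [← hmul, hid]
  have hmul_right (f : ℝ → ℝ) : cfc f A * A = cfc (fun x ↦ f x * x) A := by rw [← hmul, hid]
  have hsymm (f : ℝ → ℝ) : (cfc f A)ᵀ = cfc f A := cfc_predicate f A
  refine ⟨?_, ?_, ?_, ?_⟩
  · rw [hmul_left, hmul_right]
    simp only [mul_inv_mul_cancel, hid]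
  · rw [hmul_right, hmul]
    exact congrArg (cfc · A) (funext fun x ↦ by simpa only [inv_inv] using mul_inv_mul_cancel x⁻¹)
  · rw [hmul_left, hsymm]
  · rw [hmul_right, hsymm]

theorem IsMoorePenrose.mul_transpose {A : Matrix k l ℝ} {B : Matrix l l ℝ}
    (h : IsMoorePenrose (Aᵀ * A) B) : IsMoorePenrose A (B * Aᵀ) := by
  classical
  have hB : Bᵀ = B := h.isSymm (isHermitian_conjTranspose_mul_self A)
  have hcancel : A * (B * (Aᵀ * A) - 1) = 0 := by
    rw [← conjTranspose_mul_self_mul_eq_zero, conjTranspose_eq_transpose_of_trivial,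
      Matrix.mul_sub, ← Matrix.mul_assoc, h.1, Matrix.mul_one, sub_self]
  refine ⟨?_, ?_, ?_, ?_⟩
  · rw [Matrix.mul_sub, Matrix.mul_one, sub_eq_zero] at hcancel
    simpa only [Matrix.mul_assoc] using hcancel
  · simpa only [Matrix.mul_assoc] using congrArg (· * Aᵀ) h.2.1
  · simp only [transpose_mul, transpose_transpose, hB, Matrix.mul_assoc]
  · rw [Matrix.mul_assoc, h.2.2.2]

theorem exists_isMoorePenrose (A : Matrix k l ℝ) : ∃ B, IsMoorePenrose A B := by
  classical
  exact ⟨_, (isMoorePenrose_cfc_inv (isHermitian_conjTranspose_mul_self A)).mul_transpose⟩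

theorem isMoorePenrose_pinv {n : ℕ} (A : Matrix (Fin n) (Fin n) ℝ) :
    IsMoorePenrose A (pinv A) := by
  rw [pinv, dif_pos (exists_isMoorePenrose A)]
  exact (exists_isMoorePenrose A).choose_spec

theorem pinv_pinv {n : ℕ} (A : Matrix (Fin n) (Fin n) ℝ) : pinv (pinv A) = A :=
  (isMoorePenrose_pinv (pinv A)).unique (isMoorePenrose_pinv A).symm

end Pseudoinverse

section Kernel

variable {l m R : Type*} [Fintype m]

theorem rank_eq_card_sub_one_iff [Field R] {A : Matrix l m R} (hA : A *ᵥ 1 = 0) :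
    A.rank = Fintype.card m - 1 ↔ ∀ x, A *ᵥ x = 0 → ∀ i j, x i = x j := by
  have hrank : A.rank + Module.finrank R (LinearMap.ker A.mulVecLin) = Fintype.card m := by
    rw [← Module.finrank_fintype_fun_eq_card R]
    exact A.mulVecLin.finrank_range_add_finrank_ker
  cases isEmpty_or_nonempty m with
  | inl h => simp_all
  | inr h =>
    let u : LinearMap.ker A.mulVecLin := ⟨1, hA⟩
    have hu : u ≠ 0 := fun h ↦ one_ne_zero (congrArg Subtype.val h)
    have hcard : 0 < Fintype.card m := Fintype.card_pos
    have hker : A.rank = Fintype.card m - 1 ↔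
        Module.finrank R (LinearMap.ker A.mulVecLin) = 1 := by lia
    rw [hker, finrank_eq_one_iff_of_nonzero' u hu]
    constructor
    · intro hspan x hx i j
      obtain ⟨c, hc⟩ := hspan ⟨x, hx⟩
      obtain rfl : c • 1 = x := congrArg Subtype.val hc
      rfl
    · rintro hconst ⟨x, hx⟩
      obtain ⟨i⟩ := h
      exact ⟨x i, Subtype.ext <| funext fun j ↦ by simpa [u] using hconst x hx i j⟩

-- The indicator of a set split off by `A` commutes with `A` as a diagonal matrix.
theorem exists_mem_notMem_apply_ne_zero [Semiring R] [Nontrivial R] {A : Matrix m m R}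
    (hsymm : A.IsSymm) (hA : A *ᵥ 1 = 0) (hker : ∀ x, A *ᵥ x = 0 → ∀ i j, x i = x j)
    {V : Finset m} (hV : V.Nonempty) (hV' : V ≠ Finset.univ) :
    ∃ i ∈ V, ∃ j ∉ V, A i j ≠ 0 := by
  classical
  by_contra! hsplit
  let d : m → R := fun i ↦ if i ∈ V then 1 else 0
  have hcomm : A * diagonal d = diagonal d * A := by
    ext i j
    by_cases hi : i ∈ V <;> by_cases hj : j ∈ V
    · simp [d, hi, hj]
    · simp [d, hi, hj, hsplit i hi j hj]
    · simp [d, hi, hj, ← hsymm.apply i j, hsplit j hj i hi]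
    · simp [d, hi, hj]
  have hd : A *ᵥ d = 0 :=
    calc A *ᵥ d = A *ᵥ (diagonal d *ᵥ 1) := by
          congr 1
          ext i
          rw [mulVec_diagonal, Pi.one_apply, mul_one]
      _ = 0 := by rw [mulVec_mulVec, hcomm, ← mulVec_mulVec, hA, mulVec_zero]
  obtain ⟨i, hi⟩ := hV
  obtain ⟨j, hj⟩ : ∃ j, j ∉ V := by simpa [Finset.eq_univ_iff_forall] using hV'
  simpa [d, hi, hj] using hker d hd i j

theorem sum_sum_mul_sub_sq [CommRing R] {A : Matrix m m R} (hsymm : A.IsSymm)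
    (hA : A *ᵥ 1 = 0) (x : m → R) :
    ∑ i, ∑ j, A i j * (x i - x j) ^ 2 = -2 * (x ⬝ᵥ A *ᵥ x) := by
  have hrow (i : m) : ∑ j, A i j = 0 := by
    simpa only [mulVec, dotProduct, Pi.one_apply, Pi.zero_apply, mul_one] using congrFun hA i
  have hleft : ∑ i, ∑ j, A i j * x i ^ 2 = 0 := by
    simp only [← Finset.sum_mul, hrow, zero_mul, Finset.sum_const_zero]
  have hright : ∑ i, ∑ j, A i j * x j ^ 2 = 0 := by
    rw [Finset.sum_comm, ← hleft]
    simp only [hsymm.apply]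
  calc ∑ i, ∑ j, A i j * (x i - x j) ^ 2
      = ∑ i, ∑ j, A i j * x i ^ 2 + ∑ i, ∑ j, A i j * x j ^ 2
          - 2 * ∑ i, ∑ j, x i * (A i j * x j) := by
        simp only [Finset.mul_sum, ← Finset.sum_add_distrib, ← Finset.sum_sub_distrib]
        exact Finset.sum_congr rfl fun i _ ↦ Finset.sum_congr rfl fun j _ ↦ by ring
    _ = -2 * (x ⬝ᵥ A *ᵥ x) := by
        simp only [hleft, hright, dotProduct, mulVec, Finset.mul_sum]
        simp

end Kernel

section Laplacian

variable {m : Type*} [Fintype m] [DecidableEq m] {Q : Matrix m m ℝ}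

namespace IsLaplacian

theorem mul_sub_sq_nonpos (hQ : IsLaplacian Q) (x : m → ℝ) (i j : m) :
    Q i j * (x i - x j) ^ 2 ≤ 0 := by
  obtain rfl | hij := eq_or_ne i j
  · simp
  · exact mul_nonpos_of_nonpos_of_nonneg (hQ.2.1 i j hij) (sq_nonneg _)

theorem posSemidef (hQ : IsLaplacian Q) : Q.PosSemidef := by
  refine .of_dotProduct_mulVec_nonneg hQ.1 fun x ↦ ?_
  have henergy := sum_sum_mul_sub_sq hQ.1 hQ.2.2.1 x
  have hnonpos : ∑ i, ∑ j, Q i j * (x i - x j) ^ 2 ≤ 0 :=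
    Finset.sum_nonpos fun i _ ↦ Finset.sum_nonpos fun j _ ↦ hQ.mul_sub_sq_nonpos x i j
  rw [star_trivial]
  linarith

theorem apply_eq_of_mulVec_eq_zero (hQ : IsLaplacian Q) {x : m → ℝ} (hx : Q *ᵥ x = 0)
    (i j : m) : x i = x j := by
  have hterm (a b : m) : Q a b * (x a - x b) ^ 2 = 0 := by
    have hsum : ∑ p : m × m, Q p.1 p.2 * (x p.1 - x p.2) ^ 2 = 0 := by
      rw [Fintype.sum_prod_type, sum_sum_mul_sub_sq hQ.1 hQ.2.2.1, hx, dotProduct_zero, mul_zero]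
    exact (Finset.sum_eq_zero_iff_of_nonpos fun p _ ↦ hQ.mul_sub_sq_nonpos x p.1 p.2).1 hsum
      (a, b) (Finset.mem_univ _)
  have huniv : ({a | x a = x j} : Finset m) = Finset.univ := by
    by_contra hne
    obtain ⟨a, ha, b, hb, hab⟩ := hQ.2.2.2 _ ⟨j, by simp⟩ hne
    simp only [Finset.mem_filter_univ] at ha hb
    have hxab : x a = x b := by simpa [hab, sub_eq_zero] using hterm a b
    exact hb (hxab ▸ ha)
  simpa using huniv.ge (Finset.mem_univ i)

end IsLaplacian

theorem isLaplacian_iff_rank :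
    IsLaplacian Q ↔ Q.IsSymm ∧ (∀ i j, i ≠ j → Q i j ≤ 0) ∧ Q *ᵥ 1 = 0 ∧
      Q.rank = Fintype.card m - 1 := by
  constructor
  · intro hQ
    exact ⟨hQ.1, hQ.2.1, hQ.2.2.1, (rank_eq_card_sub_one_iff hQ.2.2.1).2
      fun _ hx ↦ hQ.apply_eq_of_mulVec_eq_zero hx⟩
  · rintro ⟨hsymm, hoff, hone, hrank⟩
    exact ⟨hsymm, hoff, hone, fun _ ↦ exists_mem_notMem_apply_ne_zero hsymm hone
      ((rank_eq_card_sub_one_iff hone).1 hrank)⟩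

theorem mem_hypGramSet_iff_isLaplacian_pinv {n : ℕ} {M : Matrix (Fin n) (Fin n) ℝ} :
    M ∈ HypGramSet n ↔ IsLaplacian (pinv M) := by
  have hpinv := isMoorePenrose_pinv M
  constructor
  · rintro ⟨hsymm, -, hone, hrank, hoff⟩
    refine isLaplacian_iff_rank.2 ⟨hpinv.isSymm hsymm, hoff, hpinv.mulVec_eq_zero ?_, ?_⟩
    · rwa [hsymm.eq]
    · rw [← hpinv.rank_eq, hrank, Fintype.card_fin]
  · intro hL
    obtain ⟨hsymm, hoff, hone, hrank⟩ := isLaplacian_iff_rank.1 hL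
    refine ⟨hpinv.symm.isSymm hsymm, hpinv.symm.posSemidef hL.posSemidef,
      hpinv.symm.mulVec_eq_zero ?_, ?_, hoff⟩
    · rwa [hsymm.eq]
    · rw [hpinv.rank_eq, hrank, Fintype.card_fin]

end Laplacian

theorem stmt_6 {n : ℕ} (hn : 2 ≤ n) :
    Set.BijOn pinv (LapSet n) (HypGramSet n) ∧
    Set.InvOn pinv pinv (LapSet n) (HypGramSet n) := by
  have hinv : Set.InvOn pinv pinv (LapSet n) (HypGramSet n) :=
    ⟨fun Q _ ↦ pinv_pinv Q, fun M _ ↦ pinv_pinv M⟩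
  refine ⟨hinv.bijOn (fun Q hQ ↦ ?_) (fun M hM ↦ ?_), hinv⟩
  · rw [mem_hypGramSet_iff_isLaplacian_pinv, pinv_pinv]
    exact hQ
  · exact mem_hypGramSet_iff_isLaplacian_pinv.1 hM
end

section
/- Let n ≥ 2, let Q be an n×n Laplacian matrix, and let S be a real (n−1)×n matrix with S·u = 0 and Sᵀ·S = Q†, with columns s_1, …, s_n. Let ζ be the vector of diagonal entries of Q†, r = (1/2)·Q·ζ + u/n, and R² = (1/2)·ζᵀ·(r + u/n). Then uᵀ·r = 1 and for every index i, ‖S·r − s_i‖² = R²; that is, S·r is the circumcenter of the simplex with vertices s_1, …, s_n and √(R²) is its circumradius. -/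
open Matrix

/-!
For a Laplacian `Q` the kernel consists of the constant vectors: if `Q x ≤ 0`, the maximum of `x`
propagates along the nonzero entries of `Q`. Hence the Gram matrix `G = SᵀS = Q†` satisfies
`G Q = I - u uᵀ / n`, so `G r = (ζ - m u) / 2` with `m` the mean of `ζ`. In the expansion
`‖S r - sᵢ‖² = rᵀ G r - 2 (G r)ᵢ + ζᵢ` the terms depending on `i` therefore cancel.
-/

section MaximumPrinciple

variable {ι R : Type*} [Fintype ι] [CommRing R] [LinearOrder R] [IsStrictOrderedRing R]

theorem apply_eq_of_mulVec_apply_nonpos_of_forall_le {Q : Matrix ι ι R} {x : ι → R} {i j : ι}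
    (hoff : ∀ k, i ≠ k → Q i k ≤ 0) (hrow : ∑ k, Q i k = 0) (hx : (Q *ᵥ x) i ≤ 0)
    (hmax : ∀ k, x k ≤ x i) (hij : Q i j ≠ 0) : x j = x i := by
  have hsum : ∑ k, Q i k * (x k - x i) = (Q *ᵥ x) i := by
    simp [mulVec, dotProduct, mul_sub, Finset.sum_sub_distrib, ← Finset.sum_mul, hrow]
  have hnonneg : ∀ k ∈ Finset.univ, 0 ≤ Q i k * (x k - x i) := by
    intro k _
    obtain rfl | hik := eq_or_ne i k
    · simp
    · exact mul_nonneg_of_nonpos_of_nonpos (hoff k hik) (sub_nonpos.2 (hmax k))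
  have hzero : ∑ k, Q i k * (x k - x i) = 0 :=
    le_antisymm (hsum.trans_le hx) (Finset.sum_nonneg hnonneg)
  have hterm := (Finset.sum_eq_zero_iff_of_nonneg hnonneg).1 hzero j (Finset.mem_univ j)
  exact sub_eq_zero.1 ((mul_eq_zero.1 hterm).resolve_left hij)

end MaximumPrinciple

namespace IsLaplacian

variable {ι : Type*} [Fintype ι] [DecidableEq ι] {Q : Matrix ι ι ℝ}

theorem one_vecMul (hQ : IsLaplacian Q) : 1 ᵥ* Q = 0 := by
  obtain ⟨hsymm, -, hrow, -⟩ := hQ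
  rw [← mulVec_transpose, hsymm.eq]
  exact hrow

theorem apply_eq_of_mulVec_nonpos (hQ : IsLaplacian Q) {x : ι → ℝ} (hx : Q *ᵥ x ≤ 0) (i j : ι) :
    x i = x j := by
  obtain ⟨-, hoff, hrow, hirr⟩ := hQ
  have : Nonempty ι := ⟨i⟩
  obtain ⟨m, hm⟩ := Finite.exists_max x
  have hrow_sum (a : ι) : ∑ k, Q a k = 0 := by
    simpa [mulVec, dotProduct] using congrFun hrow a
  suffices hV : Finset.univ.filter (x · = x m) = Finset.univ by
    have hconst (a : ι) : x a = x m := Finset.filter_eq_self.1 hV a (Finset.mem_univ a)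
    rw [hconst i, hconst j]
  by_contra hV
  obtain ⟨a, ha, b, hb, hab⟩ := hirr _ ⟨m, by simp⟩ hV
  simp only [Finset.mem_filter, Finset.mem_univ, true_and] at ha hb
  exact hb ((apply_eq_of_mulVec_apply_nonpos_of_forall_le (hoff a) (hrow_sum a) (hx a)
    (fun k => ha ▸ hm k) hab).trans ha)

theorem ker_mulVecLin (hQ : IsLaplacian Q) : Q.mulVecLin.ker = Submodule.span ℝ {1} := by
  refine le_antisymm (fun x hx => ?_) ((Submodule.span_singleton_le_iff_mem _ _).2 hQ.2.2.1)
  obtain _ | ⟨⟨i⟩⟩ := isEmpty_or_nonempty ι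
  · simp [Subsingleton.elim x 0]
  · refine Submodule.mem_span_singleton.2 ⟨x i, funext fun j => ?_⟩
    simpa using hQ.apply_eq_of_mulVec_nonpos (LinearMap.mem_ker.1 hx).le i j

end IsLaplacian

section Gram

variable {ι κ R : Type*} [Fintype ι] [Fintype κ] [CommRing R]

theorem one_vecMul_transpose_mul_self {S : Matrix κ ι R} (hS : S *ᵥ 1 = 0) :
    1 ᵥ* (Sᵀ * S) = 0 := by
  rw [← vecMul_vecMul, vecMul_transpose, hS, zero_vecMul]

theorem sum_sq_mulVec_sub_apply (S : Matrix κ ι R) (r : ι → R) (i : ι) :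
    ∑ k, ((S *ᵥ r) k - S k i) ^ 2 =
      r ⬝ᵥ ((Sᵀ * S) *ᵥ r) - 2 * ((Sᵀ * S) *ᵥ r) i + (Sᵀ * S) i i := by
  have hquad : r ⬝ᵥ ((Sᵀ * S) *ᵥ r) = ∑ k, (S *ᵥ r) k * (S *ᵥ r) k := by
    rw [← mulVec_mulVec, dotProduct_mulVec, vecMul_transpose, dotProduct]
  have hcross : ((Sᵀ * S) *ᵥ r) i = ∑ k, S k i * (S *ᵥ r) k := by
    rw [← mulVec_mulVec]
    rfl
  have hdiag : (Sᵀ * S) i i = ∑ k, S k i * S k i := rfl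
  rw [hquad, hcross, hdiag, Finset.mul_sum, ← Finset.sum_sub_distrib, ← Finset.sum_add_distrib]
  exact Finset.sum_congr rfl fun k _ => by ring

end Gram

section Field

variable {ι κ K : Type*} [Fintype ι] [Fintype κ] [Field K]

theorem mulVec_mulVec_eq_sub_mean (hι : (Fintype.card ι : K) ≠ 0) {Q G : Matrix ι ι K}
    (hker : Q.mulVecLin.ker = Submodule.span K {1}) (hG : 1 ᵥ* G = 0) (hQG : Q * G * Q = Q)
    (x : ι → K) : G *ᵥ (Q *ᵥ x) = x - ((Fintype.card ι : K)⁻¹ * (1 ⬝ᵥ x)) • 1 := by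
  have hmem : x - G *ᵥ (Q *ᵥ x) ∈ Q.mulVecLin.ker := by
    simp [mulVec_sub, ← Matrix.mul_assoc, hQG]
  rw [hker, Submodule.mem_span_singleton] at hmem
  obtain ⟨c, hc⟩ := hmem
  have hmean : Fintype.card ι * c = 1 ⬝ᵥ x := by
    have hGQ : 1 ⬝ᵥ (G *ᵥ (Q *ᵥ x)) = 0 := by rw [dotProduct_mulVec, hG, zero_dotProduct]
    calc Fintype.card ι * c = 1 ⬝ᵥ (c • (1 : ι → K)) := by simp [mul_comm]
      _ = 1 ⬝ᵥ x := by rw [hc, dotProduct_sub, hGQ, sub_zero]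
  rw [← hmean, inv_mul_cancel_left₀ hι, hc, sub_sub_cancel]

theorem stmt_8_general (h2 : (2 : K) ≠ 0) (hι : (Fintype.card ι : K) ≠ 0) {Q : Matrix ι ι K}
    (hker : Q.mulVecLin.ker = Submodule.span K {1}) (hcol : 1 ᵥ* Q = 0)
    {S : Matrix κ ι K} (hS : S *ᵥ 1 = 0) (hQS : Q * (Sᵀ * S) * Q = Q)
    {ζ : ι → K} (hζ : ∀ i, ζ i = (Sᵀ * S) i i)
    {r : ι → K} (hr : r = (1 / 2 : K) • (Q *ᵥ ζ) + (Fintype.card ι : K)⁻¹ • 1)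
    {R2 : K} (hR2 : R2 = (1 / 2 : K) * (ζ ⬝ᵥ (r + (Fintype.card ι : K)⁻¹ • 1))) :
    1 ⬝ᵥ r = 1 ∧ ∀ i, ∑ k, ((S *ᵥ r) k - S k i) ^ 2 = R2 := by
  have hsum : 1 ⬝ᵥ r = 1 := by
    simp [hr, dotProduct_add, dotProduct_mulVec, hcol, hι]
  refine ⟨hsum, fun i => ?_⟩
  set m := (Fintype.card ι : K)⁻¹ * (1 ⬝ᵥ ζ)
  have hGr : (Sᵀ * S) *ᵥ r = (1 / 2 : K) • (ζ - m • 1) := by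
    rw [hr, mulVec_add, mulVec_smul, mulVec_smul,
      mulVec_mulVec_eq_sub_mean hι hker (one_vecMul_transpose_mul_self hS) hQS,
      ← mulVec_mulVec, hS, mulVec_zero, smul_zero, add_zero]
  have hrGr : r ⬝ᵥ ((Sᵀ * S) *ᵥ r) = 1 / 2 * (ζ ⬝ᵥ r - m) := by
    rw [hGr, dotProduct_smul, dotProduct_sub, dotProduct_smul, dotProduct_comm r 1, hsum,
      dotProduct_comm r ζ, smul_eq_mul, smul_eq_mul, mul_one]
  have hR2m : R2 = 1 / 2 * (ζ ⬝ᵥ r + m) := by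
    rw [hR2, dotProduct_add, dotProduct_smul, dotProduct_comm ζ 1, smul_eq_mul]
  rw [sum_sq_mulVec_sub_apply, hrGr, hGr, ← hζ, hR2m]
  simp only [Pi.smul_apply, Pi.sub_apply, Pi.one_apply, smul_eq_mul]
  field_simp
  ring

end Field

/-- `S·r` is the circumcenter and `√R²` the circumradius of the simplex whose
vertex matrix is `S`. -/
theorem stmt_8 {n : ℕ} (hn : 2 ≤ n) (Q : Matrix (Fin n) (Fin n) ℝ)
    (hQ : IsLaplacian Q)
    (Qd : Matrix (Fin n) (Fin n) ℝ) (hQd : IsMoorePenrose Q Qd)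
    (S : Matrix (Fin (n - 1)) (Fin n) ℝ)
    (hSu : S *ᵥ (fun _ => (1 : ℝ)) = 0) (hS : Sᵀ * S = Qd)
    (ζ : Fin n → ℝ) (hζ : ∀ i, ζ i = Qd i i)
    (r : Fin n → ℝ)
    (hr : r = (1 / 2 : ℝ) • (Q *ᵥ ζ) + (n : ℝ)⁻¹ • (fun _ => (1 : ℝ)))
    (R2 : ℝ)
    (hR2 : R2 = (1 / 2 : ℝ) * (ζ ⬝ᵥ (r + (n : ℝ)⁻¹ • (fun _ => (1 : ℝ))))) :
    (fun _ => (1 : ℝ)) ⬝ᵥ r = 1 ∧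
    ∀ i : Fin n, ∑ k, ((S *ᵥ r) k - S k i) ^ 2 = R2 := by
  subst hS
  have hn0 : (Fintype.card (Fin n) : ℝ) ≠ 0 :=
    Nat.cast_ne_zero.2 (by rw [Fintype.card_fin]; omega)
  exact stmt_8_general two_ne_zero hn0 hQ.ker_mulVecLin hQ.one_vecMul hSu hQd.1 hζ
    (by rwa [Fintype.card_fin]) (by rwa [Fintype.card_fin])
end

section
/- Let n ≥ 2, let Q be an n×n Laplacian matrix, and let V be a nonempty proper subset of the index set with |V| = v. Then the Schur complement Q/V^c = Q_{VV} − Q_{VV^c}·(Q_{V^cV^c})⁻¹·Q_{V^cV} satisfies (Q/V^c)† = C·(Q†)_{VV}·C, where C = I − u·uᵀ/v is the v×v centering matrix and † denotes the Moore–Penrose pseudoinverse; that is, the Schur complement of the Laplacian is the canonical pseudoinverse Gram matrix of the corresponding face of the associated simplex. -/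
open Matrix

/-- The Schur complement `Q/Vᶜ` of `Q` with respect to the removed index set `Vᶜ`
(keeping the indices in `V`): `Q_{VV} − Q_{VVᶜ}·(Q_{VᶜVᶜ})⁻¹·Q_{VᶜV}`. -/
noncomputable def schurKeep {m : Type*} [Fintype m] [DecidableEq m]
    (Q : Matrix m m ℝ) (V : Finset m) : Matrix ↥V ↥V ℝ :=
  Q.submatrix (Subtype.val : ↥V → m) (Subtype.val : ↥V → m) -
    Q.submatrix (Subtype.val : ↥V → m) (Subtype.val : ↥(Vᶜ) → m) *
      (Q.submatrix (Subtype.val : ↥(Vᶜ) → m) (Subtype.val : ↥(Vᶜ) → m))⁻¹ *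
      Q.submatrix (Subtype.val : ↥(Vᶜ) → m) (Subtype.val : ↥V → m)

/-- The centering matrix `I − u·uᵀ/v` on the index set `V`. -/
noncomputable def centering {m : Type*} [Fintype m] [DecidableEq m] (V : Finset m) :
    Matrix ↥V ↥V ℝ :=
  1 - (V.card : ℝ)⁻¹ • Matrix.of (fun _ _ => (1 : ℝ))

/-!
The Schur complement `S = Q/Vᶜ` is the response matrix of `Q` on `V`: if `Q x` vanishes off `V`,
then `S x_V = (Q x)_V`. For a vector `z` on `V` with zero sum, extend `z` by zero and put
`x = G z`, where `Q G Q = Q`. The rows of `1 - Q G` lie in the left kernel of `Q`, so they are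
constant and kill `z`; hence `Q x = z` and `S G_{VV} z = z`, that is, `S G_{VV} C = C`. Since `S`
kills constants, `S (C G_{VV} C) = C`, and the same argument for `Qᵀ` gives `(C G_{VV} C) S = C`.
-/

section ZeroExtension

variable {R k l m : Type*} [CommSemiring R] [Fintype k] [Fintype m] {f : k → m}

lemma extend_zero_dotProduct (hf : f.Injective) (x : k → R) (w : m → R) :
    Function.extend f x 0 ⬝ᵥ w = x ⬝ᵥ (w ∘ f) := by
  refine (Fintype.sum_of_injective f hf _ _ (fun i hi => ?_) fun i => ?_).symm
  · rw [Function.extend_apply' _ _ _ hi, Pi.zero_apply, zero_mul]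
  · rw [hf.extend_apply, Function.comp_apply]

lemma mulVec_extend_zero (hf : f.Injective) (A : Matrix l m R) (x : k → R) :
    A *ᵥ Function.extend f x 0 = A.submatrix id f *ᵥ x := by
  ext i
  rw [mulVec, dotProduct_comm, extend_zero_dotProduct hf, dotProduct_comm]
  rfl

lemma extend_zero_dotProduct_mulVec_extend_zero (hf : f.Injective) (A : Matrix m m R) (x : k → R) :
    Function.extend f x 0 ⬝ᵥ A *ᵥ Function.extend f x 0 = x ⬝ᵥ A.submatrix f f *ᵥ x := by
  rw [extend_zero_dotProduct hf, mulVec_extend_zero hf]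
  rfl

end ZeroExtension

section SchurComplement

variable {m : Type*} [Fintype m] [DecidableEq m]

lemma mulVec_comp_eq_add_compl {R k l : Type*} [NonUnitalNonAssocSemiring R] (A : Matrix l m R)
    (V : Finset m) (f : k → l) (x : m → R) :
    (A *ᵥ x) ∘ f = A.submatrix f (Subtype.val : ↥V → m) *ᵥ (x ∘ Subtype.val) +
      A.submatrix f (Subtype.val : ↥(Vᶜ) → m) *ᵥ (x ∘ Subtype.val) := by
  ext i
  simp only [Function.comp_apply, Pi.add_apply, mulVec, dotProduct, submatrix_apply]
  rw [Finset.sum_coe_sort V (fun j => A (f i) j * x j),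
    Finset.sum_coe_sort Vᶜ (fun j => A (f i) j * x j), Finset.sum_add_sum_compl]

lemma schurKeep_mulVec {Q : Matrix m m ℝ} {V : Finset m}
    (hD : IsUnit (Q.submatrix (Subtype.val : ↥(Vᶜ) → m) (Subtype.val : ↥(Vᶜ) → m)))
    {x : m → ℝ} (hx : ∀ i ∉ V, (Q *ᵥ x) i = 0) :
    schurKeep Q V *ᵥ (x ∘ Subtype.val) = (Q *ᵥ x) ∘ Subtype.val := by
  set D := Q.submatrix (Subtype.val : ↥(Vᶜ) → m) (Subtype.val : ↥(Vᶜ) → m) with hD_def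
  set E := Q.submatrix (Subtype.val : ↥(Vᶜ) → m) (Subtype.val : ↥V → m) with hE_def
  have hrows : E *ᵥ (x ∘ Subtype.val) + D *ᵥ (x ∘ Subtype.val) = 0 := by
    rw [← mulVec_comp_eq_add_compl]
    exact funext fun i => hx i (Finset.mem_compl.1 i.2)
  have hsolve : D⁻¹ *ᵥ E *ᵥ (x ∘ Subtype.val) = -(x ∘ Subtype.val) := by
    rw [eq_neg_of_add_eq_zero_left hrows, mulVec_neg, mulVec_mulVec,
      nonsing_inv_mul _ ((isUnit_iff_isUnit_det D).1 hD), one_mulVec]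
  rw [mulVec_comp_eq_add_compl Q V, schurKeep, ← hD_def, ← hE_def, sub_mulVec, ← mulVec_mulVec,
    ← mulVec_mulVec, hsolve, mulVec_neg, sub_neg_eq_add]

lemma schurKeep_transpose (Q : Matrix m m ℝ) (V : Finset m) :
    schurKeep Qᵀ V = (schurKeep Q V)ᵀ := by
  simp only [schurKeep, transpose_sub, transpose_mul, transpose_nonsing_inv, transpose_submatrix,
    Matrix.mul_assoc]

end SchurComplement

section Centering

variable {m : Type*} [Fintype m] [DecidableEq m] {V : Finset m}

lemma centering_mulVec (x : ↥V → ℝ) :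
    centering V *ᵥ x = x - ((V.card : ℝ)⁻¹ * ∑ i, x i) • 1 := by
  rw [centering, sub_mulVec, one_mulVec, smul_mulVec]
  ext i
  simp [mulVec, dotProduct]

lemma centering_isSymm : (centering V).IsSymm := by
  ext i j
  simp [centering, one_apply, eq_comm]

lemma sum_centering_mulVec (x : ↥V → ℝ) : ∑ i, (centering V *ᵥ x) i = 0 := by
  rcases V.eq_empty_or_nonempty with rfl | hV
  · simp
  · have hcard : (V.card : ℝ) ≠ 0 := by exact_mod_cast hV.card_ne_zero
    simp [centering_mulVec, hcard]

lemma centering_mulVec_of_sum_eq_zero {x : ↥V → ℝ} (hx : ∑ i, x i = 0) :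
    centering V *ᵥ x = x := by
  rw [centering_mulVec, hx, mul_zero, zero_smul, sub_zero]

lemma centering_mul_self : centering V * centering V = centering V :=
  ext_iff_mulVec.2 fun x => by
    rw [← mulVec_mulVec, centering_mulVec_of_sum_eq_zero (sum_centering_mulVec x)]

lemma mul_centering_of_mulVec_one {k : Type*} {A : Matrix k ↥V ℝ} (hA : A *ᵥ 1 = 0) :
    A * centering V = A :=
  ext_iff_mulVec.2 fun x => by
    rw [← mulVec_mulVec, centering_mulVec, mulVec_sub, mulVec_smul, hA, smul_zero, sub_zero]

end Centering

lemma isMoorePenrose_of_mul_eq {k : Type*} [Fintype k] {A B P : Matrix k k ℝ} (hP : P.IsSymm)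
    (hAB : A * B = P) (hBA : B * A = P) (hAP : A * P = A) (hPB : P * B = B) :
    IsMoorePenrose A B :=
  ⟨by rw [Matrix.mul_assoc, hBA, hAP], by rw [hBA, hPB], by rw [hAB, hP.eq], by rw [hBA, hP.eq]⟩

/-- The kernel of `Q` is the line of constant vectors, as for the Laplacian of a connected graph.
Constancy is spelled out coordinatewise; the condition on the left kernel is stated for `Qᵀ`. -/
def HasConstantKernel {m : Type*} [Fintype m] (Q : Matrix m m ℝ) : Prop :=
  ∀ x : m → ℝ, Q *ᵥ x = 0 ↔ ∀ i j, x i = x j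

namespace HasConstantKernel

variable {m : Type*} [Fintype m] {Q G : Matrix m m ℝ}

lemma mulVec_mulVec_of_sum_eq_zero (hQt : HasConstantKernel Qᵀ) (hG : Q * G * Q = Q)
    {y : m → ℝ} (hy : ∑ i, y i = 0) : Q *ᵥ G *ᵥ y = y := by
  classical
  have hleft : (1 - Q * G) * Q = 0 := by rw [Matrix.sub_mul, Matrix.one_mul, hG, sub_self]
  have hconst (i j k : m) : (1 - Q * G) i j = (1 - Q * G) i k := by
    refine (hQt ((1 - Q * G) i)).1 ?_ j k
    rw [mulVec_transpose]
    exact congrFun hleft i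
  have hkill : (1 - Q * G) *ᵥ y = 0 := by
    ext i
    calc ((1 - Q * G) *ᵥ y) i = ∑ j, (1 - Q * G) i i * y j :=
          Finset.sum_congr rfl fun j _ => congrArg (· * y j) (hconst i j i)
      _ = 0 := by rw [← Finset.mul_sum, hy, mul_zero]
  rw [sub_mulVec, one_mulVec, sub_eq_zero] at hkill
  rw [mulVec_mulVec, ← hkill]

variable [DecidableEq m] {V : Finset m}

lemma schurKeep_mulVec_one (hQ : HasConstantKernel Q)
    (hD : IsUnit (Q.submatrix (Subtype.val : ↥(Vᶜ) → m) (Subtype.val : ↥(Vᶜ) → m))) :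
    schurKeep Q V *ᵥ 1 = 0 := by
  have hone : Q *ᵥ 1 = 0 := (hQ 1).2 fun _ _ => rfl
  have hS := schurKeep_mulVec (x := 1) hD fun i _ => congrFun hone i
  rwa [hone] at hS

lemma schurKeep_mulVec_submatrix_mulVec (hQt : HasConstantKernel Qᵀ) (hG : Q * G * Q = Q)
    (hD : IsUnit (Q.submatrix (Subtype.val : ↥(Vᶜ) → m) (Subtype.val : ↥(Vᶜ) → m)))
    {z : ↥V → ℝ} (hz : ∑ i, z i = 0) :
    schurKeep Q V *ᵥ G.submatrix Subtype.val Subtype.val *ᵥ z = z := by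
  set y : m → ℝ := Function.extend Subtype.val z 0 with hy_def
  have hy : ∑ i, y i = 0 := by
    rw [← dotProduct_one, hy_def, extend_zero_dotProduct Subtype.val_injective]
    exact (dotProduct_one z).trans hz
  have hQGy : Q *ᵥ G *ᵥ y = y := hQt.mulVec_mulVec_of_sum_eq_zero hG hy
  have hsupp : ∀ i ∉ V, (Q *ᵥ G *ᵥ y) i = 0 := fun i hi => by
    rw [hQGy]
    exact Function.extend_apply' _ _ _ fun ⟨j, hj⟩ => hi (hj ▸ j.2)
  have hGz : (G *ᵥ y) ∘ (Subtype.val : ↥V → m) = G.submatrix Subtype.val Subtype.val *ᵥ z := by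
    rw [hy_def, mulVec_extend_zero Subtype.val_injective]
    rfl
  rw [← hGz, schurKeep_mulVec hD hsupp, hQGy, hy_def,
    Function.extend_comp Subtype.val_injective]

lemma schurKeep_mul_centering (hQ : HasConstantKernel Q)
    (hD : IsUnit (Q.submatrix (Subtype.val : ↥(Vᶜ) → m) (Subtype.val : ↥(Vᶜ) → m))) :
    schurKeep Q V * centering V = schurKeep Q V :=
  mul_centering_of_mulVec_one (hQ.schurKeep_mulVec_one hD)

lemma schurKeep_mul_centering_mul_submatrix_mul_centering (hQ : HasConstantKernel Q)
    (hQt : HasConstantKernel Qᵀ) (hG : Q * G * Q = Q)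
    (hD : IsUnit (Q.submatrix (Subtype.val : ↥(Vᶜ) → m) (Subtype.val : ↥(Vᶜ) → m))) :
    schurKeep Q V * (centering V * G.submatrix Subtype.val Subtype.val * centering V) =
      centering V := by
  rw [← Matrix.mul_assoc, ← Matrix.mul_assoc, hQ.schurKeep_mul_centering hD]
  refine ext_iff_mulVec.2 fun x => ?_
  rw [← mulVec_mulVec, ← mulVec_mulVec,
    hQt.schurKeep_mulVec_submatrix_mulVec hG hD (sum_centering_mulVec x)]

lemma centering_mul_submatrix_mul_centering_mul_schurKeep (hQ : HasConstantKernel Q)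
    (hQt : HasConstantKernel Qᵀ) (hG : Q * G * Q = Q)
    (hD : IsUnit (Q.submatrix (Subtype.val : ↥(Vᶜ) → m) (Subtype.val : ↥(Vᶜ) → m))) :
    centering V * G.submatrix Subtype.val Subtype.val * centering V * schurKeep Q V =
      centering V := by
  have hGt : Qᵀ * Gᵀ * Qᵀ = Qᵀ := by
    rw [← transpose_mul, ← transpose_mul, ← Matrix.mul_assoc, hG]
  have hDt : IsUnit (Qᵀ.submatrix (Subtype.val : ↥(Vᶜ) → m) (Subtype.val : ↥(Vᶜ) → m)) := by
    rwa [← transpose_submatrix, isUnit_transpose]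
  have h := congrArg transpose <|
    hQt.schurKeep_mul_centering_mul_submatrix_mul_centering (by rwa [transpose_transpose]) hGt hDt
  simpa only [schurKeep_transpose, transpose_mul, transpose_submatrix, transpose_transpose,
    centering_isSymm.eq, Matrix.mul_assoc] using h

end HasConstantKernel

lemma two_mul_dotProduct_mulVec {R m : Type*} [CommRing R] [Fintype m] {Q : Matrix m m R}
    (hsymm : Q.IsSymm) (hrow : Q *ᵥ 1 = 0) (x : m → R) :
    2 * (x ⬝ᵥ Q *ᵥ x) = -∑ i, ∑ j, Q i j * (x i - x j) ^ 2 := by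
  have hrow_sum (i : m) : ∑ j, Q i j = 0 := by
    simpa only [mulVec, dotProduct_one, Pi.zero_apply] using congrFun hrow i
  have hleft : ∑ i, ∑ j, Q i j * x i ^ 2 = 0 := by
    simp only [← Finset.sum_mul, hrow_sum, zero_mul, Finset.sum_const_zero]
  have hright : ∑ i, ∑ j, Q i j * x j ^ 2 = 0 := by
    rw [Finset.sum_comm, ← hleft]
    simp only [hsymm.apply]
  have hmid : ∑ i, ∑ j, Q i j * (x i * x j) = x ⬝ᵥ Q *ᵥ x := by
    simp only [dotProduct, mulVec, Finset.mul_sum, mul_left_comm]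
  have hexpand (i j : m) : Q i j * (x i - x j) ^ 2 =
      Q i j * x i ^ 2 + Q i j * x j ^ 2 - 2 * (Q i j * (x i * x j)) := by ring
  simp only [hexpand, Finset.sum_sub_distrib, Finset.sum_add_distrib, ← Finset.mul_sum, hleft,
    hright, hmid, add_zero, zero_sub, neg_neg]

namespace IsLaplacian

variable {m : Type*} [Fintype m] [DecidableEq m] {Q : Matrix m m ℝ}

lemma mul_sq_sub_eq_zero (hQ : IsLaplacian Q) {x : m → ℝ} (hx : x ⬝ᵥ Q *ᵥ x = 0) (i j : m) :
    Q i j * (x i - x j) ^ 2 = 0 := by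
  obtain ⟨hsymm, hoff, hrow, -⟩ := hQ
  have hnonpos (i j : m) : Q i j * (x i - x j) ^ 2 ≤ 0 := by
    rcases eq_or_ne i j with rfl | hij
    · simp
    · exact mul_nonpos_of_nonpos_of_nonneg (hoff i j hij) (sq_nonneg _)
  have hsum : ∑ i, ∑ j, Q i j * (x i - x j) ^ 2 = 0 := by
    rw [← neg_eq_zero, ← two_mul_dotProduct_mulVec hsymm hrow, hx, mul_zero]
  have hrow_zero := (Finset.sum_eq_zero_iff_of_nonpos fun i _ =>
    Finset.sum_nonpos fun j _ => hnonpos i j).1 hsum i (Finset.mem_univ i)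
  exact (Finset.sum_eq_zero_iff_of_nonpos fun j _ => hnonpos i j).1 hrow_zero j (Finset.mem_univ j)

lemma eq_of_dotProduct_mulVec_eq_zero (hQ : IsLaplacian Q) {x : m → ℝ}
    (hx : x ⬝ᵥ Q *ᵥ x = 0) (i j : m) : x i = x j := by
  by_contra hij
  obtain ⟨a, ha, b, hb, hab⟩ := hQ.2.2.2 (Finset.univ.filter fun k => x k = x i) ⟨i, by simp⟩
    fun huniv => hij (Finset.filter_eq_self.1 huniv j (Finset.mem_univ j)).symm
  rw [Finset.mem_filter_univ] at ha hb
  have hab_eq : x a = x b := by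
    simpa [hab, sub_eq_zero] using hQ.mul_sq_sub_eq_zero hx a b
  exact hb (hab_eq ▸ ha)

lemma hasConstantKernel (hQ : IsLaplacian Q) : HasConstantKernel Q := by
  refine fun x => ⟨fun hx => hQ.eq_of_dotProduct_mulVec_eq_zero (by rw [hx, dotProduct_zero]),
    fun hx => funext fun i => ?_⟩
  calc (Q *ᵥ x) i = (Q *ᵥ 1) i * x i := by
        simp only [mulVec, dotProduct, hx _ i, Finset.sum_mul, Pi.one_apply, mul_one]
    _ = 0 := by rw [show Q *ᵥ 1 = 0 from hQ.2.2.1, Pi.zero_apply, zero_mul]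

lemma isUnit_submatrix {k : Type*} [Fintype k] [DecidableEq k] (hQ : IsLaplacian Q) {f : k → m}
    (hf : f.Injective) (hf' : ¬f.Surjective) : IsUnit (Q.submatrix f f) := by
  rw [← mulVec_injective_iff_isUnit]
  refine (injective_iff_map_eq_zero (Q.submatrix f f).mulVecLin).2 fun x hx => funext fun i => ?_
  obtain ⟨j, hj⟩ := not_forall.1 hf'
  have hquad : Function.extend f x 0 ⬝ᵥ Q *ᵥ Function.extend f x 0 = 0 := by
    rw [extend_zero_dotProduct_mulVec_extend_zero hf, ← mulVecLin_apply, hx, dotProduct_zero]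
  calc x i = Function.extend f x 0 (f i) := (hf.extend_apply x 0 i).symm
    _ = Function.extend f x 0 j := hQ.eq_of_dotProduct_mulVec_eq_zero hquad _ _
    _ = 0 := Function.extend_apply' _ _ _ hj

lemma isUnit_submatrix_compl (hQ : IsLaplacian Q) {V : Finset m} (hV : V.Nonempty) :
    IsUnit (Q.submatrix (Subtype.val : ↥(Vᶜ) → m) (Subtype.val : ↥(Vᶜ) → m)) := by
  obtain ⟨i, hi⟩ := hV
  refine hQ.isUnit_submatrix Subtype.val_injective fun hsurj => ?_
  obtain ⟨j, rfl⟩ := hsurj i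
  exact Finset.mem_compl.1 j.2 hi

end IsLaplacian

theorem stmt_12_general {m : Type*} [Fintype m] [DecidableEq m] {Q G : Matrix m m ℝ}
    (hQ : HasConstantKernel Q) (hQt : HasConstantKernel Qᵀ) (hG : Q * G * Q = Q) {V : Finset m}
    (hD : IsUnit (Q.submatrix (Subtype.val : ↥(Vᶜ) → m) (Subtype.val : ↥(Vᶜ) → m))) :
    IsMoorePenrose (schurKeep Q V)
      (centering V * G.submatrix (Subtype.val : ↥V → m) (Subtype.val : ↥V → m) * centering V) :=
  isMoorePenrose_of_mul_eq centering_isSymm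
    (hQ.schurKeep_mul_centering_mul_submatrix_mul_centering hQt hG hD)
    (hQ.centering_mul_submatrix_mul_centering_mul_schurKeep hQt hG hD)
    (hQ.schurKeep_mul_centering hD)
    (by rw [← Matrix.mul_assoc, ← Matrix.mul_assoc, centering_mul_self])

/-- The Schur complement of a Laplacian is the canonical pseudoinverse Gram matrix
of the corresponding face: `(Q/Vᶜ)† = C·(Q†)_{VV}·C`. -/
theorem stmt_12 {n : ℕ} (hn : 2 ≤ n) (Q : Matrix (Fin n) (Fin n) ℝ)
    (hQ : IsLaplacian Q)
    (Qd : Matrix (Fin n) (Fin n) ℝ) (hQd : IsMoorePenrose Q Qd)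
    (V : Finset (Fin n)) (hV : V.Nonempty) (hVu : V ≠ Finset.univ) :
    IsMoorePenrose (schurKeep Q V)
      (centering V *
        Qd.submatrix (Subtype.val : ↥V → Fin n) (Subtype.val : ↥V → Fin n) *
        centering V) := by
  exact stmt_12_general hQ.hasConstantKernel (hQ.1.eq.symm ▸ hQ.hasConstantKernel) hQd.1
    (hQ.isUnit_submatrix_compl hV)
end

section
/- Let n ≥ 2, let Q be an n×n Laplacian matrix, and let V be a proper subset of the index set with |V| ≥ 2. Then the Schur complement Q/V^c = Q_{VV} − Q_{VV^c}·(Q_{V^cV^c})⁻¹·Q_{V^cV} is again a Laplacian matrix: it is symmetric, has all off-diagonal entries ≤ 0, has zero row sums, and is irreducible. -/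
open Matrix

/-! Everything rests on the strong minimum principle: a nonconstant `f` attains its minimum at
some point where `Q *ᵥ f` is negative. Hence a function is determined by its values on a nonempty
`V` and the values of `Q *ᵥ f` off `V`, which makes the removed block invertible, so every `g` on
`V` has a harmonic extension `f`. The Schur complement is the Dirichlet-to-Neumann map: it sends
`g` to the restriction of `Q *ᵥ f` to `V`, so its row sums, signs and irreducibility are read off
from the harmonic extensions of the constant `1`, of point masses and of indicator functions. -/

section Block

variable {m R : Type*}

/-- The block `Q_{UV}` of `Q` with rows in `U` and columns in `V`. -/
def block (Q : Matrix m m R) (U V : Finset m) : Matrix U V R :=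
  Q.submatrix Subtype.val Subtype.val

variable [Fintype m] [DecidableEq m]

theorem exists_restrict_eq_and_restrict_compl_eq (V : Finset m) (g : V → R) (h : ↥Vᶜ → R) :
    ∃ f : m → R, V.restrict f = g ∧ Vᶜ.restrict f = h := by
  refine ⟨fun i ↦ if hi : i ∈ V then g ⟨i, hi⟩ else h ⟨i, Finset.mem_compl.2 hi⟩, ?_, ?_⟩
  · ext v
    simp
  · ext w
    simp [Finset.mem_compl.1 w.2]

theorem restrict_mulVec_eq_add [NonUnitalNonAssocSemiring R] (Q : Matrix m m R) (U V : Finset m)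
    (f : m → R) :
    U.restrict (Q *ᵥ f) = block Q U V *ᵥ V.restrict f + block Q U Vᶜ *ᵥ Vᶜ.restrict f := by
  ext u
  change ∑ k, Q u k * f k = ∑ v : V, Q u v * f v + ∑ w : ↥Vᶜ, Q u w * f w
  rw [Finset.sum_coe_sort V (fun k ↦ Q u k * f k), Finset.sum_coe_sort Vᶜ (fun k ↦ Q u k * f k),
    Finset.sum_add_sum_compl]

theorem exists_harmonic_extension [CommRing R] {Q : Matrix m m R} {V : Finset m}
    (hC : IsUnit (block Q Vᶜ Vᶜ)) (g : V → R) :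
    ∃ f : m → R, V.restrict f = g ∧ Vᶜ.restrict (Q *ᵥ f) = 0 := by
  obtain ⟨f, hfV, hfc⟩ := exists_restrict_eq_and_restrict_compl_eq V g
    (-((block Q Vᶜ Vᶜ)⁻¹ *ᵥ block Q Vᶜ V *ᵥ g))
  refine ⟨f, hfV, ?_⟩
  rw [restrict_mulVec_eq_add Q Vᶜ V, hfV, hfc, mulVec_neg, mulVec_mulVec,
    mul_nonsing_inv _ ((isUnit_iff_isUnit_det _).1 hC), one_mulVec, add_neg_cancel]

end Block

section SchurKeep

variable {m : Type*} [Fintype m] [DecidableEq m] {Q : Matrix m m ℝ} {V : Finset m}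

theorem schurKeep_eq_block (Q : Matrix m m ℝ) (V : Finset m) :
    schurKeep Q V = block Q V V - block Q V Vᶜ * (block Q Vᶜ Vᶜ)⁻¹ * block Q Vᶜ V :=
  rfl

theorem schurKeep_mulVec_restrict (hC : IsUnit (block Q Vᶜ Vᶜ)) {f : m → ℝ}
    (hf : Vᶜ.restrict (Q *ᵥ f) = 0) :
    schurKeep Q V *ᵥ V.restrict f = V.restrict (Q *ᵥ f) := by
  have hsolve : (block Q Vᶜ Vᶜ)⁻¹ *ᵥ block Q Vᶜ V *ᵥ V.restrict f = -Vᶜ.restrict f := by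
    rw [restrict_mulVec_eq_add Q Vᶜ V, add_eq_zero_iff_eq_neg] at hf
    rw [hf, mulVec_neg, mulVec_mulVec, nonsing_inv_mul _ ((isUnit_iff_isUnit_det _).1 hC),
      one_mulVec]
  rw [schurKeep_eq_block, sub_mulVec, ← mulVec_mulVec, ← mulVec_mulVec, hsolve, mulVec_neg,
    sub_neg_eq_add, ← restrict_mulVec_eq_add]

theorem isSymm_schurKeep (hQ : Q.IsSymm) (V : Finset m) : (schurKeep Q V).IsSymm := by
  simp only [IsSymm, schurKeep, transpose_sub, transpose_mul, transpose_nonsing_inv,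
    transpose_submatrix, hQ.eq, Matrix.mul_assoc]

end SchurKeep

/-- The Laplacian matrix of a strongly connected weighted digraph: the conditions of `IsLaplacian`
other than symmetry, over an ordered ring. This is what the minimum principle needs. -/
structure IsDirectedLaplacian {m R : Type*} [Fintype m] [Ring R] [LE R]
    (Q : Matrix m m R) : Prop where
  offDiag_nonpos : ∀ i j, i ≠ j → Q i j ≤ 0
  mulVec_one : Q *ᵥ 1 = 0
  exists_ne_zero : ∀ V : Finset m, V.Nonempty → V ≠ Finset.univ → ∃ i ∈ V, ∃ j ∉ V, Q i j ≠ 0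

theorem isLaplacian_iff {m : Type*} [Fintype m] [DecidableEq m] {Q : Matrix m m ℝ} :
    IsLaplacian Q ↔ Q.IsSymm ∧ IsDirectedLaplacian Q :=
  ⟨fun ⟨hsymm, hoff, hrow, hirr⟩ ↦ ⟨hsymm, hoff, hrow, hirr⟩,
    fun ⟨hsymm, hoff, hrow, hirr⟩ ↦ ⟨hsymm, hoff, hrow, hirr⟩⟩

namespace IsDirectedLaplacian

section MinimumPrinciple

variable {m R : Type*} [Fintype m] [Ring R] [LinearOrder R] {Q : Matrix m m R} {V : Finset m}
  {f : m → R} {i : m}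

theorem mulVec_eq_sum_mul_sub (hQ : IsDirectedLaplacian Q) (f : m → R) (i : m) :
    (Q *ᵥ f) i = ∑ k, Q i k * (f k - f i) := by
  have hrow : ∑ k, Q i k = 0 := by simpa [mulVec, dotProduct] using congrFun hQ.mulVec_one i
  simp only [mulVec, dotProduct, mul_sub, Finset.sum_sub_distrib, ← Finset.sum_mul, hrow, zero_mul,
    sub_zero]

variable [IsStrictOrderedRing R]

theorem mul_sub_nonpos_of_forall_le (hQ : IsDirectedLaplacian Q) (hmin : ∀ k, f i ≤ f k) (k : m) :
    Q i k * (f k - f i) ≤ 0 := by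
  obtain rfl | hik := eq_or_ne i k
  · simp
  · exact mul_nonpos_of_nonpos_of_nonneg (hQ.offDiag_nonpos i k hik) (sub_nonneg.2 (hmin k))

theorem mulVec_nonpos_of_forall_le (hQ : IsDirectedLaplacian Q) (hmin : ∀ k, f i ≤ f k) :
    (Q *ᵥ f) i ≤ 0 := by
  rw [hQ.mulVec_eq_sum_mul_sub]
  exact Finset.sum_nonpos fun k _ ↦ hQ.mul_sub_nonpos_of_forall_le hmin k

theorem exists_forall_le_and_mulVec_neg (hQ : IsDirectedLaplacian Q) {a b : m} (hab : f a ≠ f b) :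
    ∃ i, (∀ k, f i ≤ f k) ∧ (Q *ᵥ f) i < 0 := by
  have : Nonempty m := ⟨a⟩
  obtain ⟨c, hc⟩ := Finite.exists_min f
  obtain ⟨i, hi, j, hj, hij⟩ := hQ.exists_ne_zero {k | f k = f c} ⟨c, by simp⟩ fun huniv ↦ by
    have hconst (k : m) : f k = f c := by simpa using huniv.ge (Finset.mem_univ k)
    exact hab ((hconst a).trans (hconst b).symm)
  replace hi : f i = f c := by simpa using hi
  replace hj : f j ≠ f c := by simpa using hj
  have hmin (k : m) : f i ≤ f k := hi ▸ hc k
  have hne : f i ≠ f j := fun h ↦ hj (h ▸ hi)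
  have hQij : Q i j < 0 := (hQ.offDiag_nonpos i j (ne_of_apply_ne f hne)).lt_of_ne hij
  refine ⟨i, hmin, ?_⟩
  rw [hQ.mulVec_eq_sum_mul_sub]
  exact Finset.sum_neg' (fun k _ ↦ hQ.mul_sub_nonpos_of_forall_le hmin k)
    ⟨j, Finset.mem_univ j, mul_neg_of_neg_of_pos hQij (sub_pos.2 ((hmin j).lt_of_ne hne))⟩

theorem nonneg_of_mulVec_nonneg (hQ : IsDirectedLaplacian Q) (hV : V.Nonempty)
    (hfV : ∀ i ∈ V, 0 ≤ f i) (hf : ∀ i ∉ V, 0 ≤ (Q *ᵥ f) i) : 0 ≤ f := by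
  by_contra hneg
  obtain ⟨b, hb⟩ : ∃ b, f b < 0 := by simpa [Pi.le_def] using hneg
  obtain ⟨v, hv⟩ := hV
  obtain ⟨i, hmin, hQi⟩ := hQ.exists_forall_le_and_mulVec_neg (hb.trans_le (hfV v hv)).ne
  have hi : i ∈ V := by_contra fun hi ↦ (hf i hi).not_gt hQi
  exact ((hfV i hi).trans (hmin b)).not_gt hb

theorem eq_zero_of_mulVec_eq_zero (hQ : IsDirectedLaplacian Q) (hV : V.Nonempty)
    (hfV : ∀ i ∈ V, f i = 0) (hf : ∀ i ∉ V, (Q *ᵥ f) i = 0) : f = 0 := by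
  apply le_antisymm
  · rw [← neg_nonneg]
    exact hQ.nonneg_of_mulVec_nonneg hV (fun i hi ↦ by simp [hfV i hi])
      fun i hi ↦ by simp [mulVec_neg, hf i hi]
  · exact hQ.nonneg_of_mulVec_nonneg hV (fun i hi ↦ (hfV i hi).ge) fun i hi ↦ (hf i hi).ge

end MinimumPrinciple

theorem isUnit_block_compl {m K : Type*} [Fintype m] [DecidableEq m] [Field K] [LinearOrder K]
    [IsStrictOrderedRing K] {Q : Matrix m m K} (hQ : IsDirectedLaplacian Q) {V : Finset m}
    (hV : V.Nonempty) : IsUnit (block Q Vᶜ Vᶜ) := by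
  rw [← mulVec_injective_iff_isUnit]
  refine (injective_iff_map_eq_zero (block Q Vᶜ Vᶜ).mulVecLin).2 fun x hx ↦ ?_
  obtain ⟨f, hfV, rfl⟩ := exists_restrict_eq_and_restrict_compl_eq V 0 x
  have hf : Vᶜ.restrict (Q *ᵥ f) = 0 := by
    rw [restrict_mulVec_eq_add Q Vᶜ V, hfV, mulVec_zero, zero_add]
    exact hx
  have hzero : f = 0 := hQ.eq_zero_of_mulVec_eq_zero hV (fun i hi ↦ congrFun hfV ⟨i, hi⟩)
    fun i hi ↦ congrFun hf ⟨i, Finset.mem_compl.2 hi⟩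
  rw [hzero]
  rfl

section SchurKeep

variable {m : Type*} [Fintype m] [DecidableEq m] {Q : Matrix m m ℝ} {V : Finset m}

theorem schurKeep_mulVec_one (hQ : IsDirectedLaplacian Q) (hV : V.Nonempty) :
    schurKeep Q V *ᵥ 1 = 0 := by
  have h := schurKeep_mulVec_restrict (f := 1) (hQ.isUnit_block_compl hV)
    (by rw [hQ.mulVec_one]; rfl)
  rw [hQ.mulVec_one] at h
  exact h

theorem schurKeep_offDiag_nonpos (hQ : IsDirectedLaplacian Q) (hV : V.Nonempty) {i j : V}
    (hij : i ≠ j) : schurKeep Q V i j ≤ 0 := by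
  have hC := hQ.isUnit_block_compl hV
  obtain ⟨f, hfV, hf⟩ := exists_harmonic_extension hC (Pi.single j 1)
  have hnonneg : 0 ≤ f := by
    refine hQ.nonneg_of_mulVec_nonneg hV (fun v hv ↦ ?_)
      fun w hw ↦ (congrFun hf ⟨w, Finset.mem_compl.2 hw⟩).ge
    have hsingle : (0 : V → ℝ) ≤ Pi.single j 1 := Pi.single_nonneg.2 zero_le_one
    exact (hsingle ⟨v, hv⟩).trans_eq (congrFun hfV ⟨v, hv⟩).symm
  have hfi : f i = 0 := (congrFun hfV i).trans (Pi.single_eq_of_ne hij 1)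
  calc schurKeep Q V i j = (schurKeep Q V *ᵥ V.restrict f) i := by
        rw [hfV, mulVec_single_one, col_apply]
    _ = (Q *ᵥ f) i := congrFun (schurKeep_mulVec_restrict hC hf) i
    _ ≤ 0 := hQ.mulVec_nonpos_of_forall_le fun k ↦ hfi.trans_le (hnonneg k)

/-- The harmonic extension of the indicator of `V \ W` has a minimum with `Q *ᵥ f < 0`, which
harmonicity and the values on `V` force into `W`. -/
theorem schurKeep_exists_ne_zero (hQ : IsDirectedLaplacian Q) {W : Finset V} (hW : W.Nonempty)
    (hWu : W ≠ Finset.univ) : ∃ i ∈ W, ∃ j ∉ W, schurKeep Q V i j ≠ 0 := by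
  obtain ⟨a, ha⟩ := hW
  obtain ⟨b, hb⟩ : ∃ b, b ∉ W := by
    simpa only [ne_eq, Finset.eq_univ_iff_forall, not_forall] using hWu
  have hC := hQ.isUnit_block_compl ⟨a, a.2⟩
  obtain ⟨f, hfV, hf⟩ := exists_harmonic_extension hC fun v ↦ if v ∈ W then 0 else 1
  have hfa : f a = 0 := (congrFun hfV a).trans (if_pos ha)
  have hf_one {v : V} (hv : v ∉ W) : f v = 1 := (congrFun hfV v).trans (if_neg hv)
  obtain ⟨i, hmin, hQi⟩ :=
    hQ.exists_forall_le_and_mulVec_neg (f := f) (a := a) (b := b) (by simp [hfa, hf_one hb])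
  have hiV : i ∈ V := by_contra fun hi ↦ hQi.ne (congrFun hf ⟨i, Finset.mem_compl.2 hi⟩)
  lift i to V using hiV
  have hiW : i ∈ W := by_contra fun hi ↦ by linarith [hmin a, hf_one hi]
  by_contra! hvanish
  refine hQi.ne ?_
  calc (Q *ᵥ f) i = (schurKeep Q V *ᵥ V.restrict f) i :=
        (congrFun (schurKeep_mulVec_restrict hC hf) i).symm
    _ = ∑ j, schurKeep Q V i j * if j ∈ W then 0 else 1 := by rw [hfV]; rfl
    _ = 0 := Finset.sum_eq_zero fun j _ ↦ by
        by_cases hj : j ∈ W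
        · simp [hj]
        · simp [hvanish i hiW j hj]

protected theorem schurKeep (hQ : IsDirectedLaplacian Q) (hV : V.Nonempty) :
    IsDirectedLaplacian (schurKeep Q V) where
  offDiag_nonpos _ _ := hQ.schurKeep_offDiag_nonpos hV
  mulVec_one := hQ.schurKeep_mulVec_one hV
  exists_ne_zero _ := hQ.schurKeep_exists_ne_zero

end SchurKeep

end IsDirectedLaplacian

theorem stmt_14_general {m : Type*} [Fintype m] [DecidableEq m] {Q : Matrix m m ℝ}
    (hQ : IsLaplacian Q) {V : Finset m} (hV : V.Nonempty) : IsLaplacian (schurKeep Q V) := by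
  obtain ⟨hsymm, hdir⟩ := isLaplacian_iff.1 hQ
  exact isLaplacian_iff.2 ⟨isSymm_schurKeep hsymm V, hdir.schurKeep hV⟩

/-- Closure: the Schur complement of a Laplacian matrix is again a Laplacian matrix. -/
theorem stmt_14 {n : ℕ} (hn : 2 ≤ n) (Q : Matrix (Fin n) (Fin n) ℝ)
    (hQ : IsLaplacian Q)
    (V : Finset (Fin n)) (hVu : V ≠ Finset.univ) (hcard : 2 ≤ V.card) :
    IsLaplacian (schurKeep Q V) :=
  stmt_14_general hQ (Finset.card_pos.1 (by omega))
end
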